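/- Let p be an odd prime, K a finite extension of ℚ_p, and α ∈ K \ K^p. If K(α^{1/p})/K is ramified, then K(α^{1/p^s})/K(α^{1/p^{s−1}}) is ramified for every s ≥ 1. -/

import Mathlib

/-- The `ℤ_[p]`-algebra structure on a field `L` over `ℚ_[p]`. -/
noncomputable def padicIntAlgebra (p : ℕ) [Fact p.Prime] (L : Type*) [Field L]
    [Algebra ℚ_[p] L] : Algebra ℤ_[p] L :=
  ((algebraMap ℚ_[p] L).comp (algebraMap ℤ_[p] ℚ_[p])).toAlgebra

/-- The ring of integers of a `p`-adic field `L`, i.e. the integral closure of `ℤ_[p]` in `L`. -/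
noncomputable def ringOfInt (p : ℕ) [Fact p.Prime] (L : Type*) [Field L]
    [Algebra ℚ_[p] L] : Subring L :=
  letI := padicIntAlgebra p L
  (integralClosure ℤ_[p] L).toSubring

/-- The maximal ideal of the ring of integers of `L` (its Jacobson radical). -/
noncomputable def maxIdeal (p : ℕ) [Fact p.Prime] (L : Type*) [Field L]
    [Algebra ℚ_[p] L] : Ideal (ringOfInt p L) :=
  (⊥ : Ideal (ringOfInt p L)).jacobson

/-- The `i`-th ramification group (in lower numbering) of `L/K`, as a subset of `Gal(L/K)`:
`σ ∈ G_i` iff `σ x - x ∈ 𝔭_L ^ (i+1)` for every `x` in the ring of integers of `L`. -/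
noncomputable def ramSet (p : ℕ) [Fact p.Prime] (K L : Type*) [Field K] [Field L]
    [Algebra ℚ_[p] L] [Algebra K L] (i : ℕ) : Set (L ≃ₐ[K] L) :=
  {σ | ∀ x : ringOfInt p L, ∃ y ∈ maxIdeal p L ^ (i + 1), (y : L) = σ (x : L) - (x : L)}

/-- `t` is a ramification jump of `L/K` if `G_t ≠ G_{t+1}`. -/
noncomputable def IsRamJump (p : ℕ) [Fact p.Prime] (K L : Type*) [Field K] [Field L]
    [Algebra ℚ_[p] L] [Algebra K L] (t : ℕ) : Prop :=
  ramSet p K L t ≠ ramSet p K L (t + 1)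

/-- `L/K` has a unique ramification jump, equal to `t`. -/
noncomputable def HasUniqueRamJump (p : ℕ) [Fact p.Prime] (K L : Type*) [Field K] [Field L]
    [Algebra ℚ_[p] L] [Algebra K L] (t : ℕ) : Prop :=
  IsRamJump p K L t ∧ ∀ t', IsRamJump p K L t' → t' = t

/-- Same as `HasUniqueRamJump`, with the `K`-algebra structure on `L` given by an
explicit ring homomorphism. -/
noncomputable def HasUniqueRamJumpHom (p : ℕ) [Fact p.Prime] (K L : Type*) [Field K] [Field L]
    [Algebra ℚ_[p] L] (f : K →+* L) (t : ℕ) : Prop :=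
  letI := f.toAlgebra
  HasUniqueRamJump p K L t

/-- The absolute ramification index `e(L|ℚ_p)`, i.e. the valuation of `p` in `L`. -/
noncomputable def eAbs (p : ℕ) [Fact p.Prime] (L : Type*) [Field L] [Algebra ℚ_[p] L] : ℕ :=
  sSup {n : ℕ | Ideal.span {(p : ringOfInt p L)} ≤ maxIdeal p L ^ n}

/-- The normalized valuation `v_L(x)` of an integral element `x` of `L`. -/
noncomputable def valInt (p : ℕ) [Fact p.Prime] (L : Type*) [Field L] [Algebra ℚ_[p] L]
    (x : L) : ℕ :=
  sSup {n : ℕ | ∃ y ∈ maxIdeal p L ^ n, (y : L) = x}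

/-!
Suppose that `K_(s+1)/K_s` is unramified. The roots of unity of order prime to `p` in `K_(s+1)`
generate the maximal unramified subextension `U/K`, and `U ≠ K`: otherwise `K_(s+1)/K` would be
totally ramified, and so would `K_(s+1)/K_s`, which has degree `p`. By Kummer theory every
nontrivial subextension of `K(α^{1/p^(s+1)})/K` contains `α^{1/p}`, so `K_1/K` is unramified.
-/

section Preliminaries

open IsLocalRing Polynomial

section CompleteLocalRing

open scoped Pointwise in
theorem isPrecomplete_of_compactSpace {R : Type*} [CommRing R] [TopologicalSpace R]
    [IsTopologicalRing R] [CompactSpace R] [T2Space R] [IsNoetherianRing R] (I : Ideal R) :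
    IsPrecomplete I R where
  prec' f hf := by
    let S n : Set R := f n +ᵥ ((I ^ n : Ideal R) : Set R)
    have hS n : S (n + 1) ⊆ S n := by
      apply (Set.vadd_set_subset_vadd_set_iff.mpr (Ideal.pow_le_pow_right n.le_succ)).trans
      simpa [S] using (hf n.le_succ).symm
    have hclosed n : IsClosed (S n) := (IsNoetherianRing.isClosed_ideal (I ^ n)).vadd (f n)
    obtain ⟨L, hL⟩ := (hclosed 0).isCompact.nonempty_iInter_of_sequence_nonempty_isCompact_isClosed
      S hS (by simp [S]) hclosed
    refine ⟨L, fun n ↦ ?_⟩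
    obtain ⟨y, hy, rfl⟩ := Set.mem_iInter.mp hL n
    simpa [SModEq.sub_mem] using hy

theorem isAdicComplete_of_compactSpace {R : Type*} [CommRing R] [TopologicalSpace R]
    [IsTopologicalRing R] [CompactSpace R] [T2Space R] [IsNoetherianRing R] [IsLocalRing R] :
    IsAdicComplete (maximalIdeal R) R where
  toIsPrecomplete := isPrecomplete_of_compactSpace _

theorem exists_monoidHom_residue_apply_eq (p : ℕ) [Fact p.Prime] (R : Type*) [CommRing R]
    [IsLocalRing R] [IsAdicComplete (maximalIdeal R) R] [CharP (ResidueField R) p]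
    [PerfectRing (ResidueField R) p] :
    ∃ τ : ResidueField R →* R, ∀ x, residue R (τ x) = x := by
  have : CharP (R ⧸ maximalIdeal R) p := ‹CharP (ResidueField R) p›
  have : PerfectRing (R ⧸ maximalIdeal R) p := ‹PerfectRing (ResidueField R) p›
  let toPerfection := Perfection.lift p (R ⧸ maximalIdeal R) (R ⧸ maximalIdeal R) (.id _)
  exact ⟨(Perfection.teichmuller p (maximalIdeal R)).comp toPerfection.toMonoidHom, fun x ↦
    (Perfection.mk_teichmuller _).trans rfl⟩

theorem exists_pow_eq_one_of_finite_residueField (p : ℕ) [Fact p.Prime] (R : Type*) [CommRing R]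
    [IsLocalRing R] [IsAdicComplete (maximalIdeal R) R] [CharP (ResidueField R) p]
    [Finite (ResidueField R)] :
    ∃ (ω : R) (m : ℕ), IsUnit (m : R) ∧ ω ^ m = 1 ∧
      ∀ x : ResidueField R, x = 0 ∨ ∃ n : ℕ, x = residue R ω ^ n := by
  obtain ⟨τ, hτ⟩ := exists_monoidHom_residue_apply_eq p R
  obtain ⟨g, hg⟩ := IsCyclic.exists_generator (α := (ResidueField R)ˣ)
  refine ⟨τ g, Nat.card (ResidueField R)ˣ, ?_, ?_, fun x ↦ ?_⟩
  · rw [← residue_ne_zero_iff_isUnit, map_natCast]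
    have := Fintype.ofFinite (ResidueField R)
    rw [Nat.card_units, Nat.cast_pred Nat.card_pos, Nat.card_eq_fintype_card, Nat.cast_card_eq_zero,
      zero_sub]
    exact neg_ne_zero.mpr one_ne_zero
  · rw [← map_pow, ← Units.val_pow_eq_pow_val, pow_card_eq_one', Units.val_one, map_one]
  · refine or_iff_not_imp_left.mpr fun hx ↦ ?_
    obtain ⟨n, hn⟩ := mem_powers_iff_mem_zpowers.mpr (hg (Units.mk0 x hx))
    exact ⟨n, by rw [hτ]; simpa using (congrArg Units.val hn).symm⟩

end CompleteLocalRing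

section Unramified

variable {A B : Type*} (K L : Type*) [CommRing A] [IsDedekindDomain A] [CommRing B]
  [IsDedekindDomain B] [Field K] [Field L] [Algebra A B] [Algebra A K] [IsFractionRing A K]
  [Algebra B L] [IsFractionRing B L] [Algebra K L] [Algebra A L] [IsScalarTower A K L]
  [IsScalarTower A B L] [FiniteDimensional K L] [Algebra.IsSeparable K L] [IsIntegralClosure B A L]
  [Module.Finite A B] [Module.IsTorsionFree A B]

omit [IsFractionRing B L] in
include K L in
theorem differentIdeal_eq_top_of_pow_eq_one {m : ℕ} (hm : IsUnit (m : B)) {ω : B} (hω : ω ^ m = 1)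
    (hgen : Algebra.adjoin K {algebraMap B L ω} = ⊤) : differentIdeal A B = ⊤ := by
  have hm0 : m ≠ 0 := by
    rintro rfl
    simp at hm
  refine Ideal.eq_top_of_isUnit_mem _ (aeval_derivative_mem_differentIdeal A K L ω hgen) ?_
  obtain ⟨g, hg⟩ := minpoly.isIntegrallyClosed_dvd (R := A) (p := X ^ m - 1)
    (Algebra.IsIntegral.isIntegral ω) (by simp [hω])
  have hderiv : m * ω ^ (m - 1) = aeval ω (derivative (minpoly A ω)) * aeval ω g := by
    simpa [derivative_X_pow] using congrArg (fun f : A[X] ↦ aeval ω (derivative f)) hg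
  exact isUnit_of_mul_isUnit_left (hderiv ▸ hm.mul ((IsUnit.of_pow_eq_one hω hm0).pow _))

attribute [local instance] FractionRing.liftAlgebra FractionRing.isScalarTower_liftAlgebra in
include K L in
theorem isUnramifiedAt_of_pow_eq_one {m : ℕ} (hm : IsUnit (m : B)) {ω : B} (hω : ω ^ m = 1)
    (hgen : Algebra.adjoin K {algebraMap B L ω} = ⊤) (P : Ideal B) [P.IsPrime] :
    Algebra.IsUnramifiedAt A P := by
  have : Algebra.IsSeparable (FractionRing A) (FractionRing B) :=
    .of_equiv_equiv (FractionRing.algEquiv A K).symm.toRingEquiv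
      (FractionRing.algEquiv B L).symm.toRingEquiv (RingHom.ext fun _ ↦
        IsFractionRing.algEquiv_commutes (FractionRing.algEquiv A K).symm
          (FractionRing.algEquiv B L).symm _)
  rw [← not_dvd_differentIdeal_iff, differentIdeal_eq_top_of_pow_eq_one K L hm hω hgen,
    Ideal.dvd_iff_le, top_le_iff]
  exact Ideal.IsPrime.ne_top ‹_›

end Unramified

section NormedField

variable {R K L : Type*} [CommRing R] [IsDomain R] [IsIntegrallyClosed R]
  [NontriviallyNormedField K] [IsUltrametricDist K] [CompleteSpace K] [Algebra R K]
  [IsFractionRing R K] [NormedField L] [NormedAlgebra K L] [Algebra.IsAlgebraic K L]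
  [Algebra R L] [IsScalarTower R K L]

theorem isIntegral_iff_norm_le_one (hR : ∀ x : K, ‖x‖ ≤ 1 ↔ x ∈ (algebraMap R K).range) {x : L} :
    IsIntegral R x ↔ ‖x‖ ≤ 1 := by
  have hx : IsIntegral K x := Algebra.IsIntegral.isIntegral x
  rw [NormedAlgebra.norm_eq_spectralNorm K, spectralNorm,
    spectralValue_le_one_iff (minpoly.monic hx)]
  refine ⟨fun h n ↦ ?_, fun h ↦ ?_⟩
  · rw [minpoly.isIntegrallyClosed_eq_field_fractions' K h, coeff_map, hR]
    exact ⟨_, rfl⟩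
  · obtain ⟨q, hq, -, hmonic⟩ := lifts_and_natDegree_eq_and_monic
      ((lifts_iff_coeff_lifts _).mpr fun n ↦ (hR _).mp (h n)) (minpoly.monic hx)
    refine ⟨q, hmonic, ?_⟩
    rw [IsScalarTower.algebraMap_eq R K L, ← eval₂_map, hq]
    exact minpoly.aeval K x

end NormedField

section RingOfInt

variable (p : ℕ) [Fact p.Prime]

attribute [local instance] padicIntAlgebra

section Norm

variable {L : Type*} [NormedField L] [NormedAlgebra ℚ_[p] L]

theorem mem_ringOfInt_iff_norm_le_one [Algebra.IsAlgebraic ℚ_[p] L] {x : L} :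
    x ∈ ringOfInt p L ↔ ‖x‖ ≤ 1 := by
  have : IsScalarTower ℤ_[p] ℚ_[p] L := .of_algebraMap_eq' rfl
  exact isIntegral_iff_norm_le_one (R := ℤ_[p]) (K := ℚ_[p])
    fun x ↦ ⟨fun hx ↦ ⟨⟨x, hx⟩, rfl⟩, fun ⟨y, hy⟩ ↦ hy ▸ y.2⟩

variable (L) in
theorem compactSpace_ringOfInt [FiniteDimensional ℚ_[p] L] : CompactSpace (ringOfInt p L) := by
  have := FiniteDimensional.proper ℚ_[p] L
  have hball : (ringOfInt p L : Set L) = Metric.closedBall 0 1 := by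
    ext x
    simp [mem_ringOfInt_iff_norm_le_one]
  exact isCompact_iff_compactSpace.mp (hball ▸ isCompact_closedBall 0 1)

end Norm

section BaseRing

variable (K L : Type*) [Field K] [Field L] [Algebra ℚ_[p] K] [Algebra ℚ_[p] L] [Algebra K L]
  [IsScalarTower ℚ_[p] K L]

noncomputable instance : Algebra ℤ_[p] (ringOfInt p L) :=
  inferInstanceAs (Algebra ℤ_[p] (integralClosure ℤ_[p] L))

instance : IsScalarTower ℤ_[p] ℚ_[p] L := .of_algebraMap_eq' rfl

instance : IsIntegralClosure (ringOfInt p L) ℤ_[p] L :=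
  inferInstanceAs (IsIntegralClosure (integralClosure ℤ_[p] L) ℤ_[p] L)

instance : IsScalarTower ℤ_[p] K L := .of_algebraMap_eq fun x ↦
  IsScalarTower.algebraMap_apply ℚ_[p] K L (algebraMap ℤ_[p] ℚ_[p] x)

noncomputable instance : Algebra (ringOfInt p K) (ringOfInt p L) :=
  ((algebraMap K L).restrict (ringOfInt p K) (ringOfInt p L) fun _ hx ↦
    IsIntegral.map (IsScalarTower.toAlgHom ℤ_[p] K L) hx).toAlgebra

instance : IsScalarTower (ringOfInt p K) (ringOfInt p L) L := .of_algebraMap_eq fun _ ↦ rfl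

instance : IsScalarTower ℤ_[p] (ringOfInt p K) (ringOfInt p L) := .of_algebraMap_eq fun x ↦
  Subtype.ext (IsScalarTower.algebraMap_apply ℤ_[p] K L x)

instance : IsScalarTower ℤ_[p] (ringOfInt p K) L := .of_algebraMap_eq fun x ↦
  IsScalarTower.algebraMap_apply ℤ_[p] K L x

instance : FaithfulSMul (ringOfInt p K) (ringOfInt p L) :=
  (faithfulSMul_iff_algebraMap_injective _ _).mpr fun _ _ h ↦
    Subtype.ext ((algebraMap K L).injective (congrArg Subtype.val h))

instance : FaithfulSMul ℤ_[p] (ringOfInt p L) :=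
  (faithfulSMul_iff_algebraMap_injective _ _).mpr fun _ _ h ↦
    IsFractionRing.injective ℤ_[p] ℚ_[p] ((algebraMap ℚ_[p] L).injective (congrArg Subtype.val h))

instance [Algebra.IsAlgebraic ℚ_[p] L] : IsLocalRing (ringOfInt p L) := by
  let := spectralNorm.normedField ℚ_[p] L
  let := spectralNorm.normedAlgebra ℚ_[p] L
  have hinv (x : L) : x ∈ ringOfInt p L ∨ x⁻¹ ∈ ringOfInt p L := by
    simp only [mem_ringOfInt_iff_norm_le_one, norm_inv]
    exact (le_total ‖x‖ 1).imp_right inv_le_one_of_one_le₀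
  exact inferInstanceAs (IsLocalRing (ValuationSubring.ofSubring _ hinv))

instance : Module.IsTorsionFree ℤ_[p] L := .trans_faithfulSMul ℤ_[p] ℚ_[p] L

/-- The absolute residue degree `f(L|ℚ_p)`, the companion of `eAbs`. -/
noncomputable def fAbs : ℕ :=
  (maxIdeal p L).inertiaDeg ℤ_[p]

variable [FiniteDimensional ℚ_[p] L]

instance : IsFractionRing (ringOfInt p L) L :=
  IsIntegralClosure.isFractionRing_of_finite_extension ℤ_[p] ℚ_[p] L (ringOfInt p L)

instance : IsDedekindDomain (ringOfInt p L) :=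
  IsIntegralClosure.isDedekindDomain ℤ_[p] ℚ_[p] L (ringOfInt p L)

instance : Module.Finite ℤ_[p] (ringOfInt p L) :=
  IsIntegralClosure.finite ℤ_[p] ℚ_[p] L (ringOfInt p L)

instance : IsAdicComplete (maximalIdeal (ringOfInt p L)) (ringOfInt p L) := by
  let := spectralNorm.normedField ℚ_[p] L
  let := spectralNorm.normedAlgebra ℚ_[p] L
  have := compactSpace_ringOfInt p L
  exact isAdicComplete_of_compactSpace

instance : Finite (ResidueField (ringOfInt p L)) := by
  let := spectralNorm.normedField ℚ_[p] L
  let := spectralNorm.normedAlgebra ℚ_[p] L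
  have := compactSpace_ringOfInt p L
  infer_instance

instance : CharP (ResidueField (ringOfInt p L)) p := by
  refine (CharP.charP_iff_prime_eq_zero Fact.out).mpr ?_
  have h := congrArg (algebraMap (ResidueField ℤ_[p]) (ResidueField (ringOfInt p L)))
    ((residue_eq_zero_iff (p : ℤ_[p])).mpr PadicInt.p_nonunit)
  simpa only [map_natCast, map_zero] using h

theorem maxIdeal_eq_maximalIdeal : maxIdeal p L = maximalIdeal (ringOfInt p L) :=
  jacobson_eq_maximalIdeal ⊥ bot_ne_top

theorem fAbs_eq_inertiaDeg :
    fAbs p L = (maximalIdeal (ringOfInt p L)).inertiaDeg ℤ_[p] := by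
  rw [fAbs, maxIdeal_eq_maximalIdeal]

theorem eAbs_eq_ramificationIdx :
    eAbs p L = (maximalIdeal (ringOfInt p L)).ramificationIdx ℤ_[p] := by
  rw [← Ideal.ramificationIdx'_eq_ramificationIdx (maximalIdeal ℤ_[p]) _
    (IsDiscreteValuationRing.not_a_field _), eAbs, maxIdeal_eq_maximalIdeal, Ideal.ramificationIdx',
    PadicInt.maximalIdeal_eq_span_p, Ideal.map_span, Set.image_singleton, map_natCast]

theorem eAbs_mul_fAbs : eAbs p L * fAbs p L = Module.finrank ℚ_[p] L := by
  have huniq := IsLocalRing.primesOver_eq (ringOfInt p L) (p := maximalIdeal ℤ_[p])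
    (IsDiscreteValuationRing.not_a_field _)
  let : Unique ((maximalIdeal ℤ_[p]).primesOver (ringOfInt p L)) :=
    ⟨⟨⟨maximalIdeal _, huniq ▸ rfl⟩⟩, fun q ↦ Subtype.ext (huniq.subset q.2)⟩
  rw [eAbs_eq_ramificationIdx, fAbs_eq_inertiaDeg, ← IsIntegralClosure.rank ℤ_[p] ℚ_[p] L
    (ringOfInt p L), ← Ideal.sum_ramification_inertia_eq_finrank (maximalIdeal ℤ_[p]),
    Fintype.sum_unique]
  rfl

end BaseRing

section Extension

variable (K L : Type*) [Field K] [Field L] [Algebra ℚ_[p] K] [Algebra ℚ_[p] L] [Algebra K L]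
  [IsScalarTower ℚ_[p] K L] [FiniteDimensional ℚ_[p] K] [FiniteDimensional ℚ_[p] L]

instance : Module.Finite (ringOfInt p K) (ringOfInt p L) :=
  .of_restrictScalars_finite ℤ_[p] _ _

theorem eAbs_dvd_eAbs : eAbs p K ∣ eAbs p L := by
  rw [eAbs_eq_ramificationIdx, eAbs_eq_ramificationIdx]
  exact Ideal.ramificationIdx_below_dvd ..

theorem fAbs_dvd_fAbs : fAbs p K ∣ fAbs p L := by
  rw [fAbs_eq_inertiaDeg, fAbs_eq_inertiaDeg]
  exact Ideal.inertiaDeg_below_dvd ..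

theorem eAbs_eq_of_pow_eq_one {m : ℕ} {ω : ringOfInt p L} (hm : IsUnit (m : ringOfInt p L))
    (hω : ω ^ m = 1) (hgen : Algebra.adjoin K {(ω : L)} = ⊤) : eAbs p L = eAbs p K := by
  have : CharZero K := charZero_of_injective_algebraMap (algebraMap ℚ_[p] K).injective
  have : FiniteDimensional K L := .of_restrictScalars_finite ℚ_[p] K L
  have := isUnramifiedAt_of_pow_eq_one (A := ringOfInt p K) K L hm hω hgen
    (maximalIdeal (ringOfInt p L))
  rw [eAbs_eq_ramificationIdx, eAbs_eq_ramificationIdx, Ideal.ramificationIdx_tower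
    (maximalIdeal (ringOfInt p K)), Ideal.ramificationIdx_eq_one _ (ringOfInt p K), mul_one]

theorem fAbs_eq_of_residueField_surjective (h : Function.Surjective
    (algebraMap (ResidueField (ringOfInt p K)) (ResidueField (ringOfInt p L)))) :
    fAbs p L = fAbs p K := by
  have hdeg : (maximalIdeal (ringOfInt p L)).inertiaDeg (ringOfInt p K) = 1 := by
    rw [Ideal.inertiaDeg_eq_of_isMaximal (maximalIdeal (ringOfInt p K))]
    exact Algebra.finrank_eq_one_iff_bijective_algebraMap (F := ResidueField _)
      (E := ResidueField _) |>.mpr ⟨FaithfulSMul.algebraMap_injective _ _, h⟩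
  rw [fAbs_eq_inertiaDeg, fAbs_eq_inertiaDeg, Ideal.inertiaDeg_tower
    (maximalIdeal (ringOfInt p K)), hdeg, mul_one]

end Extension

section Tower

open IntermediateField

variable {K Ω : Type*} [Field K] [Field Ω] [Algebra ℚ_[p] K] [Algebra K Ω] [Algebra ℚ_[p] Ω]
  [IsScalarTower ℚ_[p] K Ω] {M E : IntermediateField K Ω} [FiniteDimensional ℚ_[p] M]
  [FiniteDimensional ℚ_[p] E]

theorem eAbs_dvd_eAbs_of_le (h : M ≤ E) : eAbs p M ∣ eAbs p E := by
  let := (inclusion h).toRingHom.toAlgebra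
  have : IsScalarTower ℚ_[p] M E := .of_algebraMap_eq fun _ ↦ rfl
  exact eAbs_dvd_eAbs p M E

theorem fAbs_dvd_fAbs_of_le (h : M ≤ E) : fAbs p M ∣ fAbs p E := by
  let := (inclusion h).toRingHom.toAlgebra
  have : IsScalarTower ℚ_[p] M E := .of_algebraMap_eq fun _ ↦ rfl
  exact fAbs_dvd_fAbs p M E

variable [FiniteDimensional ℚ_[p] K]

theorem eq_of_le_of_eAbs_eq_of_fAbs_eq (h : M ≤ E) (he : eAbs p M = eAbs p E)
    (hf : fAbs p M = fAbs p E) : M = E := by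
  have : FiniteDimensional K E := .of_restrictScalars_finite ℚ_[p] K E
  have hpos : 0 < Module.finrank ℚ_[p] K := Module.finrank_pos
  refine eq_of_le_of_finrank_eq h (Nat.eq_of_mul_eq_mul_left hpos ?_)
  rw [Module.finrank_mul_finrank, Module.finrank_mul_finrank, ← eAbs_mul_fAbs, ← eAbs_mul_fAbs,
    he, hf]

variable (E) in
theorem exists_le_eAbs_eq_and_fAbs_eq : ∃ U ≤ E, eAbs p U = eAbs p K ∧ fAbs p U = fAbs p E := by
  obtain ⟨ω, m, hm, hω, hgen⟩ := exists_pow_eq_one_of_finite_residueField p (ringOfInt p E)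
  have hUE : K⟮(ω : Ω)⟯ ≤ E := adjoin_simple_le_iff.mpr (ω : E).2
  have : FiniteDimensional K E := .of_restrictScalars_finite ℚ_[p] K E
  have hωint : IsIntegral K (ω : Ω) := isIntegral_iff.mp (Algebra.IsIntegral.isIntegral (ω : E))
  have : FiniteDimensional K K⟮(ω : Ω)⟯ := adjoin.finiteDimensional hωint
  have : FiniteDimensional ℚ_[p] K⟮(ω : Ω)⟯ := .trans ℚ_[p] K _
  let := (inclusion hUE).toRingHom.toAlgebra
  have : IsScalarTower ℚ_[p] K⟮(ω : Ω)⟯ E := .of_algebraMap_eq fun _ ↦ rfl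
  let ω' : ringOfInt p K⟮(ω : Ω)⟯ := ⟨AdjoinSimple.gen K (ω : Ω),
    (isIntegral_algebraMap_iff (inclusion_injective hUE)).mp ω.2⟩
  have hω' : algebraMap (ringOfInt p K⟮(ω : Ω)⟯) (ringOfInt p E) ω' = ω := rfl
  refine ⟨K⟮(ω : Ω)⟯, hUE, eAbs_eq_of_pow_eq_one p K _ (m := m) (ω := ω') ?_ ?_
    (adjoin.powerBasis hωint).adjoin_gen_eq_top, (fAbs_eq_of_residueField_surjective p _ _ ?_).symm⟩
  · exact isUnit_of_map_unit (algebraMap _ (ringOfInt p E)) _ (by rwa [map_natCast])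
  · exact FaithfulSMul.algebraMap_injective _ (ringOfInt p E) (by rw [map_pow, map_one, hω', hω])
  · intro x
    obtain rfl | ⟨n, rfl⟩ := hgen x
    · exact ⟨0, map_zero _⟩
    · exact ⟨residue _ ω' ^ n, map_pow ..⟩

theorem exists_le_ne_bot_forall_eAbs_eq (h : M < E) (he : eAbs p M = eAbs p E) :
    ∃ U ≤ E, U ≠ ⊥ ∧ ∀ F ≤ U, eAbs p F = eAbs p K := by
  have hfin {F : IntermediateField K Ω} (hF : F ≤ E) : FiniteDimensional ℚ_[p] F :=
    .of_injective ((inclusion hF).restrictScalars ℚ_[p]).toLinearMap (inclusion_injective hF)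
  obtain ⟨U, hUE, heU, hfU⟩ := exists_le_eAbs_eq_and_fAbs_eq p E
  have := hfin hUE
  refine ⟨U, hUE, fun hU ↦ h.ne ?_, fun F hF ↦ ?_⟩
  · exact eq_of_le_of_eAbs_eq_of_fAbs_eq p h.le he <|
      Nat.dvd_antisymm (fAbs_dvd_fAbs_of_le p h.le) (hfU ▸ fAbs_dvd_fAbs_of_le p (hU ▸ bot_le))
  · have := hfin (hF.trans hUE)
    exact Nat.dvd_antisymm (heU ▸ eAbs_dvd_eAbs_of_le p hF) (eAbs_dvd_eAbs p K F)

end Tower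

end RingOfInt

section Kummer

open IntermediateField

variable {K Ω : Type*} [Field K] [Field Ω] [Algebra K Ω] {p : ℕ}

theorem minpoly_eq_X_pow_sub_C_of_prime_pow (hp : p.Prime) (hp2 : p ≠ 2) {α : K}
    (hα : ∀ b : K, b ^ p ≠ α) {n : ℕ} {b : Ω} (hb : b ^ p ^ n = algebraMap K Ω α) :
    minpoly K b = X ^ p ^ n - C α :=
  (minpoly.eq_of_irreducible_of_monic (X_pow_sub_C_irreducible_of_prime_pow hp hp2 n hα)
    (by simp [hb]) (monic_X_pow_sub_C α (pow_ne_zero _ hp.ne_zero))).symm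

theorem finrank_adjoin_of_pow_prime_pow_eq (hp : p.Prime) (hp2 : p ≠ 2) {α : K}
    (hα : ∀ b : K, b ^ p ≠ α) {n : ℕ} {b : Ω} (hb : b ^ p ^ n = algebraMap K Ω α) :
    Module.finrank K K⟮b⟯ = p ^ n := by
  have hint : IsIntegral K b := .of_pow (pow_pos hp.pos n) (hb ▸ isIntegral_algebraMap)
  rw [adjoin.finrank hint, minpoly_eq_X_pow_sub_C_of_prime_pow hp hp2 hα hb, natDegree_X_pow_sub_C]

theorem adjoin_pow_lt_adjoin (hp : p.Prime) (hp2 : p ≠ 2) {α : K} (hα : ∀ b : K, b ^ p ≠ α) {n : ℕ}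
    {b : Ω} (hb : b ^ p ^ (n + 1) = algebraMap K Ω α) : K⟮b ^ p⟯ < K⟮b⟯ := by
  refine lt_of_le_of_ne ?_ fun h ↦ n.lt_succ_self.ne (Nat.pow_right_injective hp.two_le ?_)
  · exact adjoin_simple_le_iff.mpr (pow_mem (mem_adjoin_simple_self K b) p)
  · calc p ^ n = Module.finrank K K⟮b ^ p⟯ :=
        (finrank_adjoin_of_pow_prime_pow_eq hp hp2 hα (by rw [← pow_mul, ← pow_succ', hb])).symm
      _ = Module.finrank K K⟮b⟯ := by rw [h]
      _ = p ^ (n + 1) := finrank_adjoin_of_pow_prime_pow_eq hp hp2 hα hb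

theorem mem_range_algebraMap_of_pow_prime_eq_one (hp : p.Prime) {n : ℕ}
    (hΩ : Module.finrank K Ω = p ^ n) {ζ : Ω} (hζ : ζ ^ p = 1) : ζ ∈ (algebraMap K Ω).range := by
  have : Fact p.Prime := ⟨hp⟩
  have : FiniteDimensional K Ω := .of_finrank_pos (hΩ ▸ pow_pos hp.pos n)
  obtain rfl | hζ1 := eq_or_ne ζ 1
  · exact one_mem _
  have hprim : IsPrimitiveRoot ζ p := orderOf_eq_prime hζ hζ1 ▸ .orderOf ζ
  have hdvd : minpoly K ζ ∣ cyclotomic p K := minpoly.dvd _ _ <| by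
    simpa [aeval_def, ← eval_map] using hprim.isRoot_cyclotomic hp.pos
  have hlt : (minpoly K ζ).natDegree < p := by
    refine (natDegree_le_of_dvd hdvd (cyclotomic_ne_zero p K)).trans_lt ?_
    rw [natDegree_cyclotomic]
    exact Nat.totient_lt p hp.one_lt
  have hint : IsIntegral K ζ := Algebra.IsIntegral.isIntegral ζ
  obtain ⟨k, -, hk⟩ := (Nat.dvd_prime_pow hp).mp (hΩ ▸ minpoly.degree_dvd hint)
  obtain rfl : k = 0 := by
    by_contra hk0
    exact (hlt.trans_le (Nat.le_self_pow hk0 p)).ne hk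
  exact minpoly.natDegree_eq_one_iff.mp (hk.trans (pow_zero p))

theorem mem_of_pow_prime_eq (hp : p.Prime) {U E : IntermediateField K Ω} (hUE : U ≤ E) {n : ℕ}
    (hE : Module.finrank K E = p ^ n) {x y : Ω} (hx : x ∈ E) (hy : y ∈ U) (h : x ^ p = y ^ p) :
    x ∈ U := by
  obtain rfl | hy0 := eq_or_ne y 0
  · rw [zero_pow hp.ne_zero] at h
    exact eq_zero_of_pow_eq_zero h ▸ U.zero_mem
  let ζ : E := ⟨x, hx⟩ / ⟨y, hUE hy⟩
  have hζ : ζ ^ p = 1 := Subtype.ext <| show (x / y) ^ p = 1 by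
    rw [div_pow, h, div_self (pow_ne_zero p hy0)]
  obtain ⟨z, hz⟩ := mem_range_algebraMap_of_pow_prime_eq_one hp hE hζ
  have hzxy : algebraMap K Ω z = x / y := congrArg Subtype.val hz
  rw [← div_mul_cancel₀ x hy0, ← hzxy]
  exact mul_mem (U.algebraMap_mem z) hy

theorem eq_bot_of_le_adjoin_of_forall_pow_ne (hp : p.Prime) (hp2 : p ≠ 2) {α : K} {n : ℕ} {b : Ω}
    (hb : b ^ p ^ n = algebraMap K Ω α) {U : IntermediateField K Ω} (hU : U ≤ K⟮b⟯)
    (hα : ∀ c : U, c ^ p ≠ algebraMap K U α) : U = ⊥ := by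
  have hint : IsIntegral K b := .of_pow (pow_pos hp.pos n) (hb ▸ isIntegral_algebraMap)
  have : FiniteDimensional K K⟮b⟯ := adjoin.finiteDimensional hint
  have : FiniteDimensional K U := .of_injective (inclusion hU).toLinearMap (inclusion_injective hU)
  have hE : Module.finrank K K⟮b⟯ = p ^ n := finrank_adjoin_of_pow_prime_pow_eq hp hp2
    (fun c hc ↦ hα (algebraMap K U c) (by rw [← map_pow, hc])) hb
  have hEU : Module.finrank U U⟮b⟯ = p ^ n := finrank_adjoin_of_pow_prime_pow_eq hp hp2 hα hb
  have hle : U⟮b⟯.restrictScalars K ≤ K⟮b⟯ :=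
    (adjoin_simple_le_iff (K := extendScalars hU)).mpr (mem_adjoin_simple_self K b)
  have hdeg := finrank_le_of_le_right hle
  have hmul := Module.finrank_mul_finrank K U U⟮b⟯
  have hUle : Module.finrank K U ≤ 1 := by
    refine le_of_mul_le_mul_right ?_ (pow_pos hp.pos n)
    rwa [← hEU, hmul, one_mul, hEU, ← hE]
  exact finrank_eq_one_iff.mp (hUle.antisymm Module.finrank_pos)

theorem eq_bot_or_pow_mem_of_le_adjoin (hp : p.Prime) (hp2 : p ≠ 2) {α : K}
    (hα : ∀ b : K, b ^ p ≠ α) {n : ℕ} {b : Ω} (hb : b ^ p ^ (n + 1) = algebraMap K Ω α)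
    {U : IntermediateField K Ω} (hU : U ≤ K⟮b⟯) : U = ⊥ ∨ b ^ p ^ n ∈ U := by
  by_cases! hαU : ∃ c : U, c ^ p = algebraMap K U α
  · obtain ⟨c, hc⟩ := hαU
    refine .inr (mem_of_pow_prime_eq hp hU (finrank_adjoin_of_pow_prime_pow_eq hp hp2 hα hb)
      (pow_mem (mem_adjoin_simple_self K b) _) c.2 ?_)
    rw [← pow_mul, ← pow_succ, hb]
    exact (congrArg Subtype.val hc).symm
  · exact .inl (eq_bot_of_le_adjoin_of_forall_pow_ne hp hp2 hb hU hαU)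

end Kummer

theorem pow_pow_eq_of_forall_pow_eq {M : Type*} [Monoid M] {p : ℕ} {a : ℕ → M}
    (ha : ∀ s, a (s + 1) ^ p = a s) (s n : ℕ) : a (s + n) ^ p ^ n = a s := by
  induction n with
  | zero => rw [add_zero, pow_zero, pow_one]
  | succ n ih => rw [pow_succ', pow_mul, ← add_assoc, ha, ih]

end Preliminaries

/-- Let `p` be an odd prime, `K` a finite extension of `ℚ_p` and `α ∈ K \ K^p`, with
compatible `p`-power roots `a s` of `α` in an extension `Ω`, and `K_s = K(α^{1/p^s})`.
If `K(α^{1/p})/K` is ramified then every step `K_s/K_{s-1}` is ramified.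
(Being ramified is expressed by the jump of the absolute ramification index.) -/
theorem steps_ramified (p : ℕ) [Fact p.Prime] (hp : p ≠ 2) (K Ω : Type*) [Field K] [Field Ω]
    [Algebra ℚ_[p] K] [Algebra K Ω] [Algebra ℚ_[p] Ω] [IsScalarTower ℚ_[p] K Ω]
    [FiniteDimensional ℚ_[p] K]
    (α : K) (hα : ¬∃ b : K, b ^ p = α)
    (a : ℕ → Ω) (ha0 : a 0 = algebraMap K Ω α) (hap : ∀ s, a (s + 1) ^ p = a s)
    (Ks : ℕ → IntermediateField K Ω)
    (hKs : ∀ s, Ks s = IntermediateField.adjoin K {a s})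
    (hram1 : eAbs p ↥(Ks 1) ≠ eAbs p ↥(Ks 0)) :
    ∀ s, eAbs p ↥(Ks (s + 1)) ≠ eAbs p ↥(Ks s) := by
  intro s he
  have hpp : p.Prime := Fact.out
  have hα' : ∀ b : K, b ^ p ≠ α := not_exists.mp hα
  have ha n : a n ^ p ^ n = algebraMap K Ω α := by
    simpa only [zero_add, ha0] using pow_pow_eq_of_forall_pow_eq hap 0 n
  have hfin n : FiniteDimensional ℚ_[p] (Ks n) := by
    have hint : IsIntegral K (a n) := .of_pow (pow_pos hpp.pos n) (ha n ▸ isIntegral_algebraMap)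
    have : FiniteDimensional K (Ks n) := hKs n ▸ IntermediateField.adjoin.finiteDimensional hint
    exact .trans ℚ_[p] K (Ks n)
  have hle {n} {F : IntermediateField K Ω} (h : a n ∈ F) : Ks n ≤ F :=
    hKs n ▸ IntermediateField.adjoin_simple_le_iff.mpr h
  have hlt : Ks s < Ks (s + 1) := by
    rw [hKs s, hKs (s + 1), ← hap s]
    exact adjoin_pow_lt_adjoin hpp hp hα' (ha (s + 1))
  obtain ⟨U, hUE, hU, heU⟩ := exists_le_ne_bot_forall_eAbs_eq p hlt he.symm
  have ha1 : a 1 ∈ U := by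
    rw [← pow_pow_eq_of_forall_pow_eq hap 1 s, add_comm]
    exact (eq_bot_or_pow_mem_of_le_adjoin hpp hp hα' (ha (s + 1)) (hKs _ ▸ hUE)).resolve_left hU
  have ha0U : a 0 ∈ U := ha0 ▸ U.algebraMap_mem α
  exact hram1 ((heU _ (hle ha1)).trans (heU _ (hle ha0U)).symm)
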